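/- Integration by parts for the second-order heat-convolution increment: let x = (x¹,…,x^N) : [0,T] → ℝ^N be continuously differentiable, let φ be a Schwartz function on ℝ^n, and for 0 ≤ s ≤ t ≤ T set x^{2,ij}_{ts} = ∫_s^t (x^i)'(u)(x^j_u − x^j_s) du. Then for all i,j ∈ {1,…,N} and all 0 ≤ s ≤ t ≤ T the following equality holds in L^p(ℝ^n): ∫_s^t (x^i)'(u)(x^j_u − x^j_s)(g_{t−u} * φ) du = x^{2,ij}_{ts} φ + ∫_s^t x^{2,ij}_{us} (∂g_{t−u} * φ) du, where all integrals are absolutely convergent Bochner integrals in L^p(ℝ^n) (at u = t the first integrand is interpreted as (x^i)'(t)(x^j_t − x^j_s)φ). -/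

import Mathlib

open MeasureTheory Real
open scoped ENNReal

/-- The heat kernel on ℝ^n: `g_t(ξ) = (2πt)^(-n/2) exp(-|ξ|²/(2t))`. -/
noncomputable def heatKernel (n : ℕ) (t : ℝ) : EuclideanSpace ℝ (Fin n) → ℝ :=
  fun ξ => (2 * π * t) ^ (-(n : ℝ) / 2) * Real.exp (-‖ξ‖ ^ 2 / (2 * t))

/-- Time derivative of the heat kernel:
`∂g_t(ξ) = (2πt)^(-n/2) e^{-|ξ|²/(2t)} (|ξ|²/(2t²) - n/(2t))`. -/
noncomputable def heatKernelDt (n : ℕ) (t : ℝ) : EuclideanSpace ℝ (Fin n) → ℝ :=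
  fun ξ => (2 * π * t) ^ (-(n : ℝ) / 2) * Real.exp (-‖ξ‖ ^ 2 / (2 * t)) *
    (‖ξ‖ ^ 2 / (2 * t ^ 2) - (n : ℝ) / (2 * t))

/-- Convolution of two real functions on ℝ^n. -/
noncomputable def convol {n : ℕ} (f g : EuclideanSpace ℝ (Fin n) → ℝ) :
    EuclideanSpace ℝ (Fin n) → ℝ :=
  fun ξ => ∫ η, f η * g (ξ - η)

/-- Heat semigroup at the level of functions: `S_t φ = g_t * φ` for `t > 0`,
`S_0 = Id` (also for `t ≤ 0`). -/
noncomputable def heatS (n : ℕ) (t : ℝ) (φ : EuclideanSpace ℝ (Fin n) → ℝ) :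
    EuclideanSpace ℝ (Fin n) → ℝ :=
  if 0 < t then convol (heatKernel n t) φ else φ

/-!
Substituting `η = √r z` writes `g_r * φ` as `H(√r)`, where `H(q) = ∫ g_1(z) φ(ξ - q z) dz` is
continuously differentiable in `q ∈ ℝ` and `H(0) = φ(ξ)`. All the singularity of
`∂_r (g_r * φ) = H'(√r) / (2√r)` at `r = 0` is thus in the integrable factor `1/√r`, both pointwise
and, by Minkowski's integral inequality, in `L^p`. Pointwise in `ξ` the claim is then an integration
by parts in time for absolutely continuous functions, and in `L^p` it needs only that `φ` and its
derivative belong to `L^p`.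
-/

open scoped NNReal

section Minkowski

lemma lintegral_rpow_le_measure_univ_rpow_mul_lintegral_rpow {α : Type*} [MeasurableSpace α]
    {μ : Measure α} {r : ℝ} (hr : 1 ≤ r) {f : α → ℝ≥0∞} (hf : AEMeasurable f μ) :
    (∫⁻ x, f x ∂μ) ^ r ≤ μ Set.univ ^ (r - 1) * ∫⁻ x, f x ^ r ∂μ := by
  have hr0 : 0 < r := one_pos.trans_le hr
  have h : ∫⁻ x, f x ∂μ ≤ (∫⁻ x, f x ^ r ∂μ) ^ (1 / r) * μ Set.univ ^ (1 - 1 / r) := by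
    simpa [eLpNorm'] using
      eLpNorm'_le_eLpNorm'_mul_rpow_measure_univ one_pos hr hf.aestronglyMeasurable
  calc (∫⁻ x, f x ∂μ) ^ r
      ≤ ((∫⁻ x, f x ^ r ∂μ) ^ (1 / r) * μ Set.univ ^ (1 - 1 / r)) ^ r := by gcongr
    _ = μ Set.univ ^ (r - 1) * ∫⁻ x, f x ^ r ∂μ := by
        rw [ENNReal.mul_rpow_of_nonneg _ _ hr0.le, ← ENNReal.rpow_mul, ← ENNReal.rpow_mul,
          one_div_mul_cancel hr0.ne', ENNReal.rpow_one, sub_mul, one_mul,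
          one_div_mul_cancel hr0.ne', mul_comm]

variable {Z G : Type*} [MeasurableSpace Z] {ν : Measure Z} [SFinite ν]
  [AddCommGroup G] [MeasurableSpace G] [MeasurableAdd₂ G] [MeasurableSub₂ G]
  {μ : Measure G} [SFinite μ] [μ.IsAddRightInvariant]

lemma eLpNorm_top_lintegral_comp_sub_le {τ : Z → G} (hτ : Measurable τ) {f : G → ℝ≥0∞}
    (hf : Measurable f) :
    eLpNorm (fun ξ => ∫⁻ z, f (ξ - τ z) ∂ν) ∞ μ ≤ ν Set.univ * eLpNorm f ∞ μ := by
  have hle : ∀ᵐ ξ ∂μ, ∀ᵐ z ∂ν, f (ξ - τ z) ≤ eLpNorm f ∞ μ := by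
    have hmeas : MeasurableSet {q : G × Z | f (q.1 - τ q.2) ≤ eLpNorm f ∞ μ} :=
      measurableSet_le (by fun_prop) measurable_const
    refine (Measure.ae_ae_comm hmeas).2 (.of_forall fun z => ?_)
    exact (measurePreserving_sub_right μ (τ z)).quasiMeasurePreserving.ae
      (eLpNorm_exponent_top (f := f) ▸ ae_le_eLpNormEssSup)
  rw [eLpNorm_exponent_top]
  refine eLpNormEssSup_le_of_ae_enorm_bound (hle.mono fun ξ hξ => ?_)
  calc ∫⁻ z, f (ξ - τ z) ∂ν ≤ ∫⁻ _, eLpNorm f ∞ μ ∂ν := lintegral_mono_ae hξ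
    _ = ν Set.univ * eLpNorm f ∞ μ := by rw [lintegral_const, mul_comm]

lemma eLpNorm_lintegral_comp_sub_le {p : ℝ≥0∞} (hp : 1 ≤ p) {τ : Z → G} (hτ : Measurable τ)
    {f : G → ℝ≥0∞} (hf : Measurable f) :
    eLpNorm (fun ξ => ∫⁻ z, f (ξ - τ z) ∂ν) p μ ≤ ν Set.univ * eLpNorm f p μ := by
  obtain rfl | hp_top := eq_or_ne p ∞
  · exact eLpNorm_top_lintegral_comp_sub_le hτ hf
  have hp0 : p ≠ 0 := (one_pos.trans_le hp).ne'
  set r := p.toReal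
  have hr : 1 ≤ r := by simpa [r] using ENNReal.toReal_mono hp_top hp
  have hr0 : 0 < r := one_pos.trans_le hr
  have hpow : ∫⁻ ξ, (∫⁻ z, f (ξ - τ z) ∂ν) ^ r ∂μ ≤ ν Set.univ ^ r * ∫⁻ ξ, f ξ ^ r ∂μ :=
    calc ∫⁻ ξ, (∫⁻ z, f (ξ - τ z) ∂ν) ^ r ∂μ
        ≤ ∫⁻ ξ, ν Set.univ ^ (r - 1) * ∫⁻ z, f (ξ - τ z) ^ r ∂ν ∂μ := by
          gcongr with ξ
          exact lintegral_rpow_le_measure_univ_rpow_mul_lintegral_rpow hr (by fun_prop)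
      _ = ν Set.univ ^ (r - 1) * ∫⁻ z, ∫⁻ ξ, f (ξ - τ z) ^ r ∂μ ∂ν := by
          rw [lintegral_const_mul _ (by fun_prop), lintegral_lintegral_swap (by fun_prop)]
      _ = ν Set.univ ^ (r - 1) * (ν Set.univ * ∫⁻ ξ, f ξ ^ r ∂μ) := by
          simp_rw [lintegral_sub_right_eq_self (fun ξ => f ξ ^ r), lintegral_const]
          rw [mul_comm (ν Set.univ)]
      _ = ν Set.univ ^ r * ∫⁻ ξ, f ξ ^ r ∂μ := by
          nth_rw 2 [← ENNReal.rpow_one (ν Set.univ)]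
          rw [← mul_assoc, ← ENNReal.rpow_add_of_nonneg _ _ (by linarith) zero_le_one,
            sub_add_cancel]
  simp only [eLpNorm_eq_lintegral_rpow_enorm_toReal hp0 hp_top, enorm_eq_self]
  calc (∫⁻ ξ, (∫⁻ z, f (ξ - τ z) ∂ν) ^ r ∂μ) ^ (1 / r)
      ≤ (ν Set.univ ^ r * ∫⁻ ξ, f ξ ^ r ∂μ) ^ (1 / r) := by gcongr
    _ = ν Set.univ * (∫⁻ ξ, f ξ ^ r ∂μ) ^ (1 / r) := by
        rw [ENNReal.mul_rpow_of_nonneg _ _ (by positivity), ← ENNReal.rpow_mul,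
          mul_one_div_cancel hr0.ne', ENNReal.rpow_one]

lemma eLpNorm_lintegral_mul_comp_sub_le {p : ℝ≥0∞} (hp : 1 ≤ p) {w : Z → ℝ≥0∞}
    (hw : Measurable w) {τ : Z → G} (hτ : Measurable τ) {f : G → ℝ≥0∞} (hf : Measurable f) :
    eLpNorm (fun ξ => ∫⁻ z, w z * f (ξ - τ z) ∂ν) p μ ≤ (∫⁻ z, w z ∂ν) * eLpNorm f p μ := by
  have h := eLpNorm_lintegral_comp_sub_le (ν := ν.withDensity w) (μ := μ) hp hτ hf
  rw [withDensity_apply _ .univ, setLIntegral_univ] at h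
  refine (eLpNorm_congr_ae (.of_forall fun ξ => ?_)).trans_le h
  exact (lintegral_withDensity_eq_lintegral_mul _ hw (by fun_prop)).symm

end Minkowski

section IntegrationByParts

variable {a b : ℝ → ℝ} {s t : ℝ}

lemma integral_mul_primitive (ha : IntervalIntegrable a volume s t)
    (hb : IntervalIntegrable b volume s t) :
    ∫ u in s..t, a u * ∫ v in s..u, b v =
      (∫ u in s..t, a u) * (∫ u in s..t, b u) - ∫ u in s..t, (∫ v in s..u, a v) * b u := by
  have hparts := (ha.absolutelyContinuousOnInterval_intervalIntegral
    Set.left_mem_uIcc).integral_mul_deriv_eq_deriv_mul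
      (hb.absolutelyContinuousOnInterval_intervalIntegral Set.left_mem_uIcc)
  have hderiv : ∀ {c : ℝ → ℝ}, IntervalIntegrable c volume s t →
      ∀ᵐ u, u ∈ Set.uIoc s t → deriv (fun u => ∫ v in s..u, c v) u = c u := fun hc => by
    filter_upwards [hc.ae_hasDerivAt_integral] with u hu hmem
    exact (hu (Set.uIoc_subset_uIcc hmem) s Set.left_mem_uIcc).deriv
  have hleft : ∫ u in s..t, deriv (fun u => ∫ v in s..u, a v) u * ∫ v in s..u, b v =
      ∫ u in s..t, a u * ∫ v in s..u, b v :=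
    intervalIntegral.integral_congr_ae <| (hderiv ha).mono fun u hu hmem => by rw [hu hmem]
  have hright : ∫ u in s..t, (∫ v in s..u, a v) * deriv (fun u => ∫ v in s..u, b v) u =
      ∫ u in s..t, (∫ v in s..u, a v) * b u :=
    intervalIntegral.integral_congr_ae <| (hderiv hb).mono fun u hu hmem => by rw [hu hmem]
  rw [hleft, hright, intervalIntegral.integral_same, zero_mul, sub_zero] at hparts
  linarith

lemma integral_mul_eq_of_hasDerivAt (hst : s ≤ t) {f f' : ℝ → ℝ}
    (ha : IntervalIntegrable a volume s t) (hf : ContinuousOn f (Set.Icc s t))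
    (hff' : ∀ u ∈ Set.Ioo s t, HasDerivAt f (f' u) u) (hf' : IntervalIntegrable f' volume s t) :
    ∫ u in s..t, a u * f u =
      (∫ u in s..t, a u) * f t - ∫ u in s..t, (∫ v in s..u, a v) * f' u := by
  have hFTC : ∀ u ∈ Set.Icc s t, f u = f s + ∫ v in s..u, f' v := fun u hu => by
    rw [intervalIntegral.integral_eq_sub_of_hasDerivAt_of_le hu.1
      (hf.mono (Set.Icc_subset_Icc_right hu.2))
      (fun v hv => hff' v ⟨hv.1, hv.2.trans_le hu.2⟩)
      (hf'.mono_set (Set.uIcc_subset_uIcc_left (Set.uIcc_of_le hst ▸ hu)))]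
    ring
  have hprim : ContinuousOn (fun u => ∫ v in s..u, f' v) (Set.uIcc s t) :=
    intervalIntegral.continuousOn_primitive_interval' hf' Set.left_mem_uIcc
  calc ∫ u in s..t, a u * f u = ∫ u in s..t, (a u * f s + a u * ∫ v in s..u, f' v) := by
        refine intervalIntegral.integral_congr fun u hu => ?_
        rw [Set.uIcc_of_le hst] at hu
        simp only [hFTC u hu, mul_add]
    _ = (∫ u in s..t, a u) * f s + ∫ u in s..t, a u * ∫ v in s..u, f' v := by
        rw [intervalIntegral.integral_add (ha.mul_const _) (ha.mul_continuousOn hprim),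
          intervalIntegral.integral_mul_const]
    _ = (∫ u in s..t, a u) * f t - ∫ u in s..t, (∫ v in s..u, a v) * f' u := by
        rw [integral_mul_primitive ha hf', hFTC t (Set.right_mem_Icc.2 hst)]
        ring

end IntegrationByParts

lemma intervalIntegrable_inv_sqrt_sub {s t : ℝ} (hst : s ≤ t) :
    IntervalIntegrable (fun u : ℝ => (√(t - u))⁻¹) volume s t := by
  have h := (intervalIntegral.intervalIntegrable_rpow' (a := t - s) (b := 0)
    (r := -(1 / 2)) (by norm_num)).comp_sub_left t
  rw [sub_sub_cancel, sub_zero] at h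
  refine h.congr fun u hu => ?_
  rw [Set.uIoc_of_le hst] at hu
  simp only [Real.rpow_neg (sub_nonneg.2 hu.2), Real.sqrt_eq_rpow]

lemma lintegral_eLpNorm_mul_lt_top {α : Type*} [MeasurableSpace α] {μ : Measure α} {p C : ℝ≥0∞}
    (hC : C ≠ ⊤) {s t : ℝ} (hst : s ≤ t) {c B : ℝ → ℝ} {h : ℝ → α → ℝ}
    (hcB : IntervalIntegrable (fun u => c u * B u) volume s t)
    (hh : ∀ u ∈ Set.Ioo s t, eLpNorm (h u) p μ ≤ ‖B u‖ₑ * C) :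
    ∫⁻ u in Set.Ioc s t, eLpNorm (fun ξ => c u * h u ξ) p μ < ⊤ := by
  rw [intervalIntegrable_iff_integrableOn_Ioo_of_le hst] at hcB
  rw [← restrict_Ioo_eq_restrict_Ioc]
  calc ∫⁻ u in Set.Ioo s t, eLpNorm (fun ξ => c u * h u ξ) p μ
      ≤ ∫⁻ u in Set.Ioo s t, ‖c u * B u‖ₑ * C :=
        setLIntegral_mono' measurableSet_Ioo fun u hu => by
          refine (eLpNorm_const_smul (c u) (h u) p μ).trans_le ?_
          rw [enorm_mul, mul_assoc]
          gcongr
          exact hh u hu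
    _ = (∫⁻ u in Set.Ioo s t, ‖c u * B u‖ₑ) * C := lintegral_mul_const' _ _ hC
    _ < ⊤ := ENNReal.mul_lt_top hcB.hasFiniteIntegral hC.lt_top

lemma integrable_norm_pow_mul_exp_neg_mul_sq_norm {V : Type*} [NormedAddCommGroup V]
    [NormedSpace ℝ V] [FiniteDimensional ℝ V] [MeasurableSpace V] [BorelSpace V] (μ : Measure V)
    [μ.IsAddHaarMeasure] {b : ℝ} (hb : 0 < b) (k : ℕ) :
    Integrable (fun v : V => ‖v‖ ^ k * rexp (-b * ‖v‖ ^ 2)) μ := by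
  rcases subsingleton_or_nontrivial V
  · exact .of_finite
  refine (integrable_fun_norm_addHaar μ (f := fun y => y ^ k * rexp (-b * y ^ 2))).2 ?_
  have h := integrableOn_rpow_mul_exp_neg_mul_sq hb
    (s := (Module.finrank ℝ V - 1 + k : ℕ)) (neg_one_lt_zero.trans_le (Nat.cast_nonneg _))
  simpa only [Real.rpow_natCast, pow_add, mul_assoc, smul_eq_mul] using h

lemma exists_lipschitzWith_schwartzMap {E F : Type*} [NormedAddCommGroup E] [NormedSpace ℝ E]
    [NormedAddCommGroup F] [NormedSpace ℝ F] (φ : SchwartzMap E F) : ∃ K, LipschitzWith K φ :=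
  ⟨⟨_, apply_nonneg _ _⟩, lipschitzWith_of_nnnorm_fderiv_le φ.differentiable fun ξ =>
    SchwartzMap.norm_le_seminorm ℝ (SchwartzMap.fderivCLM ℝ E F φ) ξ⟩

lemma memLp_fderiv_schwartzMap {E F : Type*} [NormedAddCommGroup E] [NormedSpace ℝ E]
    [MeasurableSpace E] [BorelSpace E] [SecondCountableTopology E] [NormedAddCommGroup F]
    [NormedSpace ℝ F] (φ : SchwartzMap E F) (p : ℝ≥0∞) (μ : Measure E) [μ.HasTemperateGrowth] :
    MemLp (fderiv ℝ φ) p μ :=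
  (SchwartzMap.fderivCLM ℝ E F φ).memLp p μ

section Mollify

variable {V F : Type*} [NormedAddCommGroup V] [NormedSpace ℝ V] [NormedAddCommGroup F]
  [NormedSpace ℝ F] {w : V → ℝ} {f : V → F} {K : ℝ≥0}

lemma norm_smul_fderiv_apply_le (hf : LipschitzWith K f) (y z : V) :
    ‖w z • fderiv ℝ f y z‖ ≤ K * ‖‖z‖ * w z‖ := by
  calc ‖w z • fderiv ℝ f y z‖ ≤ ‖w z‖ * (K * ‖z‖) := by
        rw [norm_smul]
        gcongr
        exact (fderiv ℝ f y).le_of_opNorm_le (norm_fderiv_le_of_lipschitz ℝ hf) z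
    _ = K * ‖‖z‖ * w z‖ := by
        rw [norm_mul, norm_norm]
        ring

variable [MeasureSpace V]

/-- The mollification of `f` by the weight `w` at scale `q`, evaluated at `ξ`. For `q > 0` it is the
convolution of `f` with the rescaled weight `z ↦ q⁻ᵈ w(z/q)`; keeping the scale on the argument of
`f` extends it to all real `q`, with value `(∫ w) f(ξ)` at `q = 0`. -/
noncomputable def mollify (w : V → ℝ) (f : V → F) (q : ℝ) (ξ : V) : F :=
  ∫ z, w z • f (ξ - q • z)

/-- The derivative of `mollify w f q ξ` with respect to the scale `q`, for `f` differentiable. -/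
noncomputable def mollifyDeriv (w : V → ℝ) (f : V → F) (q : ℝ) (ξ : V) : F :=
  -∫ z, w z • fderiv ℝ f (ξ - q • z) z

lemma mollify_zero [CompleteSpace F] (hw : ∫ z, w z = 1) (ξ : V) : mollify w f 0 ξ = f ξ := by
  simp [mollify, integral_smul_const, hw]

variable [BorelSpace V] [FiniteDimensional ℝ V]

lemma integrable_smul_comp_sub_smul (hw : Integrable w) (hw' : Integrable fun z => ‖z‖ * w z)
    (hf : LipschitzWith K f) (q : ℝ) (ξ : V) : Integrable fun z => w z • f (ξ - q • z) := by
  have hf_cont : Continuous f := hf.continuous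
  refine ((hw.norm.mul_const ‖f ξ‖).add (hw'.norm.const_mul (K * |q|))).mono'
    (hw.aestronglyMeasurable.smul (by fun_prop)) (.of_forall fun z => ?_)
  have hgrowth : ‖f (ξ - q • z)‖ ≤ ‖f ξ‖ + K * (|q| * ‖z‖) := by
    have h := hf.norm_sub_le (ξ - q • z) ξ
    rw [sub_sub_cancel_left, norm_neg, norm_smul, Real.norm_eq_abs] at h
    linarith [norm_le_norm_add_norm_sub' (f (ξ - q • z)) (f ξ)]
  calc ‖w z • f (ξ - q • z)‖ ≤ ‖w z‖ * (‖f ξ‖ + K * (|q| * ‖z‖)) := by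
        rw [norm_smul]
        gcongr
    _ = ‖w z‖ * ‖f ξ‖ + K * |q| * ‖‖z‖ * w z‖ := by
        rw [norm_mul, norm_norm]
        ring

lemma hasDerivAt_mollify (hw : Integrable w) (hw' : Integrable fun z => ‖z‖ * w z)
    (hf : ContDiff ℝ 1 f) (hfK : LipschitzWith K f) (q : ℝ) (ξ : V) :
    HasDerivAt (fun q => mollify w f q ξ) (mollifyDeriv w f q ξ) q := by
  have hderiv : ∀ (z : V) (q : ℝ), HasDerivAt (fun q : ℝ => w z • f (ξ - q • z))
      (-(w z • fderiv ℝ f (ξ - q • z) z)) q := fun z q => by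
    have hline : HasDerivAt (fun q : ℝ => ξ - q • z) (-z) q := by
      simpa using ((hasDerivAt_id q).smul_const z).const_sub ξ
    simpa [Function.comp_def] using
      ((hf.differentiable one_ne_zero _).hasFDerivAt.comp_hasDerivAt q hline).fun_const_smul (w z)
  rw [mollifyDeriv, ← integral_neg]
  exact (hasDerivAt_integral_of_dominated_loc_of_deriv_le
    (bound := fun z => K * ‖‖z‖ * w z‖) Filter.univ_mem
    (.of_forall fun q => (integrable_smul_comp_sub_smul hw hw' hfK q ξ).aestronglyMeasurable)
    (integrable_smul_comp_sub_smul hw hw' hfK q ξ)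
    (hw.aestronglyMeasurable.smul (by fun_prop)).neg
    (.of_forall fun z q _ => (norm_neg _).trans_le (norm_smul_fderiv_apply_le hfK _ z))
    (hw'.norm.const_mul _) (.of_forall fun z q _ => hderiv z q)).2

lemma continuous_mollifyDeriv (hw : AEStronglyMeasurable w)
    (hw' : Integrable fun z => ‖z‖ * w z) (hf : ContDiff ℝ 1 f) (hfK : LipschitzWith K f) (ξ : V) :
    Continuous fun q => mollifyDeriv w f q ξ :=
  (continuous_of_dominated (fun q => hw.smul (by fun_prop))
    (fun q => .of_forall fun z => norm_smul_fderiv_apply_le hfK _ z) (hw'.norm.const_mul _)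
    (.of_forall fun z => by fun_prop)).neg

variable [(volume : Measure V).IsAddHaarMeasure]

lemma eLpNorm_mollify_le {p : ℝ≥0∞} (hp : 1 ≤ p) (hw : Measurable w) (hf : Continuous f) (q : ℝ) :
    eLpNorm (mollify w f q) p ≤ (∫⁻ z, ‖w z‖ₑ) * eLpNorm f p := by
  have hle : ∀ ξ, ‖mollify w f q ξ‖ₑ ≤ ∫⁻ z, ‖w z‖ₑ * ‖f (ξ - q • z)‖ₑ := fun ξ => by
    simpa only [mollify, enorm_smul] using
      enorm_integral_le_lintegral_enorm fun z => w z • f (ξ - q • z)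
  have hMinkowski := eLpNorm_lintegral_mul_comp_sub_le (μ := (volume : Measure V))
    (ν := (volume : Measure V)) hp hw.enorm (measurable_const_smul q) hf.enorm.measurable
  rw [eLpNorm_enorm] at hMinkowski
  exact (eLpNorm_mono_enorm hle).trans hMinkowski

lemma eLpNorm_mollifyDeriv_le {p : ℝ≥0∞} (hp : 1 ≤ p) (hw : Measurable w) (hf : ContDiff ℝ 1 f)
    (q : ℝ) :
    eLpNorm (mollifyDeriv w f q) p ≤ (∫⁻ z, ‖‖z‖ * w z‖ₑ) * eLpNorm (fderiv ℝ f) p := by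
  have hle : ∀ ξ, ‖mollifyDeriv w f q ξ‖ₑ ≤
      ∫⁻ z, ‖‖z‖ * w z‖ₑ * ‖fderiv ℝ f (ξ - q • z)‖ₑ := fun ξ => by
    rw [mollifyDeriv, enorm_neg]
    refine (enorm_integral_le_lintegral_enorm _).trans (lintegral_mono fun z => ?_)
    calc ‖w z • fderiv ℝ f (ξ - q • z) z‖ₑ
        ≤ ‖w z‖ₑ * (‖fderiv ℝ f (ξ - q • z)‖ₑ * ‖z‖ₑ) := by
          rw [enorm_smul]
          gcongr
          exact (fderiv ℝ f (ξ - q • z)).le_opENorm z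
      _ = ‖‖z‖ * w z‖ₑ * ‖fderiv ℝ f (ξ - q • z)‖ₑ := by
          rw [enorm_mul, enorm_norm]
          ring
  have hMinkowski := eLpNorm_lintegral_mul_comp_sub_le (μ := (volume : Measure V))
    (ν := (volume : Measure V)) hp (measurable_norm.mul hw).enorm (measurable_const_smul q)
    (hf.continuous_fderiv one_ne_zero).enorm.measurable
  rw [eLpNorm_enorm] at hMinkowski
  exact (eLpNorm_mono_enorm hle).trans hMinkowski

end Mollify

section HeatKernel

variable {n : ℕ} {r : ℝ}

lemma continuous_heatKernel (r : ℝ) : Continuous (heatKernel n r) := by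
  unfold heatKernel
  fun_prop

lemma continuous_heatKernelDt (r : ℝ) : Continuous (heatKernelDt n r) := by
  unfold heatKernelDt
  fun_prop

lemma heatKernel_nonneg (hr : 0 ≤ r) (z : EuclideanSpace ℝ (Fin n)) : 0 ≤ heatKernel n r z := by
  unfold heatKernel
  positivity

lemma heatKernel_eq_mul_exp (r : ℝ) (z : EuclideanSpace ℝ (Fin n)) :
    heatKernel n r z = (2 * π * r) ^ (-(n : ℝ) / 2) * rexp (-(1 / (2 * r)) * ‖z‖ ^ 2) := by
  rw [heatKernel, neg_mul, one_div_mul_eq_div, neg_div (2 * r)]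

lemma integrable_norm_pow_mul_heatKernel (hr : 0 < r) (k : ℕ) :
    Integrable fun z => ‖z‖ ^ k * heatKernel n r z := by
  simpa only [heatKernel_eq_mul_exp, mul_left_comm] using
    (integrable_norm_pow_mul_exp_neg_mul_sq_norm _ (by positivity) k).const_mul _

lemma integrable_heatKernel (hr : 0 < r) : Integrable (heatKernel n r) := by
  simpa using integrable_norm_pow_mul_heatKernel hr 0

lemma integrable_norm_mul_heatKernel (hr : 0 < r) :
    Integrable fun z => ‖z‖ * heatKernel n r z := by
  simpa using integrable_norm_pow_mul_heatKernel hr 1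

lemma integral_heatKernel (hr : 0 < r) : ∫ z, heatKernel n r z = 1 := by
  simp_rw [heatKernel_eq_mul_exp]
  rw [integral_const_mul, GaussianFourier.integral_rexp_neg_mul_sq_norm (by positivity),
    finrank_euclideanSpace_fin, neg_div, Real.rpow_neg (by positivity), div_div_eq_mul_div,
    div_one, ← mul_assoc, mul_comm π 2]
  exact inv_mul_cancel₀ (by positivity)

lemma lintegral_enorm_heatKernel (hr : 0 < r) : ∫⁻ z, ‖heatKernel n r z‖ₑ = 1 := by
  rw [← ofReal_integral_norm_eq_lintegral_enorm (integrable_heatKernel hr)]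
  simp_rw [Real.norm_of_nonneg (heatKernel_nonneg hr.le _), integral_heatKernel hr,
    ENNReal.ofReal_one]

lemma heatKernel_sqrt_smul (hr : 0 < r) (z : EuclideanSpace ℝ (Fin n)) :
    heatKernel n r (√r • z) = (√r ^ n)⁻¹ * heatKernel n 1 z := by
  have hpow : r ^ (-(n : ℝ) / 2) = (√r ^ n)⁻¹ := by
    rw [neg_div, Real.rpow_neg hr.le, Real.sqrt_eq_rpow, ← Real.rpow_natCast,
      ← Real.rpow_mul hr.le, one_div_mul_eq_div]
  have hexp : -(r * ‖z‖ ^ 2) / (2 * r) = -‖z‖ ^ 2 / (2 * 1) := by field_simp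
  rw [heatKernel, heatKernel, norm_smul, Real.norm_of_nonneg (Real.sqrt_nonneg r), mul_pow,
    Real.sq_sqrt hr.le, hexp, Real.mul_rpow (by positivity) hr.le, hpow, mul_one (2 * π)]
  ring

lemma convol_heatKernel_eq (hr : 0 < r) (f : EuclideanSpace ℝ (Fin n) → ℝ)
    (ξ : EuclideanSpace ℝ (Fin n)) :
    convol (heatKernel n r) f ξ = mollify (heatKernel n 1) f √r ξ := by
  have hscale : 0 < √r ^ n := pow_pos (Real.sqrt_pos.2 hr) n
  have h := Measure.integral_comp_smul (volume : Measure (EuclideanSpace ℝ (Fin n)))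
    (fun η => heatKernel n r η * f (ξ - η)) √r
  simp_rw [heatKernel_sqrt_smul hr, mul_assoc] at h
  rw [integral_const_mul, finrank_euclideanSpace_fin, abs_of_pos (inv_pos.2 hscale),
    smul_eq_mul] at h
  exact (mul_left_cancel₀ (inv_pos.2 hscale).ne' h).symm

lemma heatS_eq_mollify (r : ℝ) (f : EuclideanSpace ℝ (Fin n) → ℝ)
    (ξ : EuclideanSpace ℝ (Fin n)) : heatS n r f ξ = mollify (heatKernel n 1) f √r ξ := by
  rw [heatS]
  split_ifs with hr
  · exact convol_heatKernel_eq hr f ξ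
  · rw [Real.sqrt_eq_zero_of_nonpos (not_lt.1 hr), mollify_zero (integral_heatKernel one_pos)]

lemma hasDerivAt_heatKernel (hr : 0 < r) (η : EuclideanSpace ℝ (Fin n)) :
    HasDerivAt (fun r => heatKernel n r η) (heatKernelDt n r η) r := by
  have hlin : HasDerivAt (fun r : ℝ => 2 * π * r) (2 * π) r := by
    simpa using (hasDerivAt_id r).const_mul (2 * π)
  have hnorm : HasDerivAt (fun r : ℝ => (2 * π * r) ^ (-(n : ℝ) / 2))
      (2 * π * (-(n : ℝ) / 2) * (2 * π * r) ^ (-(n : ℝ) / 2 - 1)) r :=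
    hlin.rpow_const (.inl (by positivity))
  have hquot : HasDerivAt (fun r : ℝ => -‖η‖ ^ 2 / (2 * r)) (‖η‖ ^ 2 / (2 * r ^ 2)) r := by
    refine ((hasDerivAt_const r (-‖η‖ ^ 2)).div ((hasDerivAt_id r).const_mul 2)
      (by simpa using hr.ne')).congr_deriv ?_
    simp only [id]
    field_simp
    ring
  refine (hnorm.mul hquot.exp).congr_deriv ?_
  rw [heatKernelDt, Real.rpow_sub_one (by positivity)]
  field_simp
  ring

lemma abs_heatKernelDt_le (hr : 0 < r) (η : EuclideanSpace ℝ (Fin n)) :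
    |heatKernelDt n r η| ≤
      (2 * π * r) ^ (-(n : ℝ) / 2) * ((n + 2) / r) * rexp (-(1 / (4 * r)) * ‖η‖ ^ 2) := by
  set y := ‖η‖ ^ 2 / (2 * r) with hy
  have hy0 : 0 ≤ y := by positivity
  have hpoly : |y - n / 2| ≤ (n + 2) * rexp (y / 2) :=
    calc |y - n / 2| ≤ y + n / 2 := abs_le.2 ⟨by linarith, by linarith [n.cast_nonneg (α := ℝ)]⟩
      _ ≤ (n + 2) * (y / 2 + 1) := by nlinarith [n.cast_nonneg (α := ℝ)]
      _ ≤ (n + 2) * rexp (y / 2) := by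
        gcongr
        exact add_one_le_exp _
  have hkernel : heatKernelDt n r η =
      (2 * π * r) ^ (-(n : ℝ) / 2) * (1 / r) * (rexp (-y) * (y - n / 2)) := by
    have hy' : ‖η‖ ^ 2 / (2 * r ^ 2) = y / r := by rw [hy]; field_simp
    rw [heatKernelDt, neg_div (2 * r), ← hy, hy']
    field_simp
  rw [hkernel, abs_mul, abs_mul (rexp _), abs_of_nonneg (by positivity), Real.abs_exp]
  calc (2 * π * r) ^ (-(n : ℝ) / 2) * (1 / r) * (rexp (-y) * |y - n / 2|)
      ≤ (2 * π * r) ^ (-(n : ℝ) / 2) * (1 / r) * (rexp (-y) * ((n + 2) * rexp (y / 2))) := by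
        gcongr
    _ = (2 * π * r) ^ (-(n : ℝ) / 2) * ((n + 2) / r) * (rexp (-y) * rexp (y / 2)) := by ring
    _ = (2 * π * r) ^ (-(n : ℝ) / 2) * ((n + 2) / r) * rexp (-(1 / (4 * r)) * ‖η‖ ^ 2) := by
        rw [← Real.exp_add, hy]
        congr 2
        field_simp
        ring

lemma abs_heatKernelDt_le_of_mem_Ioo (hr : 0 < r) {q : ℝ} (hq : q ∈ Set.Ioo (r / 2) (2 * r))
    (η : EuclideanSpace ℝ (Fin n)) :
    |heatKernelDt n q η| ≤
      (π * r) ^ (-(n : ℝ) / 2) * ((n + 2) / (r / 2)) * rexp (-(1 / (8 * r)) * ‖η‖ ^ 2) := by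
  have hq0 : 0 < q := (half_pos hr).trans hq.1
  have hprefactor : (2 * π * q) ^ (-(n : ℝ) / 2) ≤ (π * r) ^ (-(n : ℝ) / 2) := by
    refine Real.rpow_le_rpow_of_nonpos (by positivity) (by nlinarith [hq.1, pi_pos]) ?_
    rw [neg_div]
    exact neg_nonpos.2 (by positivity)
  have hexponent : 1 / (8 * r) ≤ 1 / (4 * q) :=
    one_div_le_one_div_of_le (by positivity) (by linarith [hq.2])
  refine (abs_heatKernelDt_le hq0 η).trans ?_
  gcongr
  exact hq.1.le

variable {φ : EuclideanSpace ℝ (Fin n) → ℝ} {K : ℝ≥0} {p : ℝ≥0∞}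

lemma hasDerivAt_convol_heatKernel (hr : 0 < r) (hφ : LipschitzWith K φ)
    (ξ : EuclideanSpace ℝ (Fin n)) :
    HasDerivAt (fun r => convol (heatKernel n r) φ ξ) (convol (heatKernelDt n r) φ ξ) r := by
  have hφ_cont : Continuous φ := hφ.continuous
  have hgauss : ∀ k : ℕ, Integrable fun η : EuclideanSpace ℝ (Fin n) =>
      ‖η‖ ^ k * rexp (-(1 / (8 * r)) * ‖η‖ ^ 2) :=
    integrable_norm_pow_mul_exp_neg_mul_sq_norm _ (by positivity)
  have hbound := (integrable_smul_comp_sub_smul (w := fun η => rexp (-(1 / (8 * r)) * ‖η‖ ^ 2))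
    (by simpa using hgauss 0) (by simpa using hgauss 1) hφ 1 ξ).norm.const_mul
      ((π * r) ^ (-(n : ℝ) / 2) * ((n + 2) / (r / 2)))
  have hint : Integrable fun η => heatKernel n r η * φ (ξ - η) := by
    simpa using integrable_smul_comp_sub_smul (integrable_heatKernel hr)
      (integrable_norm_mul_heatKernel hr) hφ 1 ξ
  refine (hasDerivAt_integral_of_dominated_loc_of_deriv_le
    (F := fun r η => heatKernel n r η * φ (ξ - η))
    (Ioo_mem_nhds (half_lt_self hr) (lt_two_mul_self hr))
    (.of_forall fun q => ((continuous_heatKernel q).mul (by fun_prop)).aestronglyMeasurable) hint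
    ((continuous_heatKernelDt r).mul (by fun_prop)).aestronglyMeasurable
    (.of_forall fun η q hq => ?_) hbound (.of_forall fun η q hq =>
      (hasDerivAt_heatKernel ((half_pos hr).trans hq.1) η).mul_const _)).2
  rw [norm_mul, norm_smul, one_smul, ← mul_assoc, Real.norm_of_nonneg (exp_pos _).le]
  gcongr
  exact abs_heatKernelDt_le_of_mem_Ioo hr hq η

lemma convol_heatKernelDt_eq (hr : 0 < r) (hφ : ContDiff ℝ 1 φ) (hφK : LipschitzWith K φ)
    (ξ : EuclideanSpace ℝ (Fin n)) :
    convol (heatKernelDt n r) φ ξ = (2 * √r)⁻¹ * mollifyDeriv (heatKernel n 1) φ √r ξ := by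
  have hscale := (hasDerivAt_mollify (integrable_heatKernel one_pos)
    (integrable_norm_mul_heatKernel one_pos) hφ hφK √r ξ).comp r (Real.hasDerivAt_sqrt hr.ne')
  rw [one_div, mul_comm] at hscale
  refine (hasDerivAt_convol_heatKernel hr hφK ξ).unique (hscale.congr_of_eventuallyEq ?_)
  filter_upwards [Ioi_mem_nhds hr] with q hq
  exact convol_heatKernel_eq hq φ ξ

lemma eLpNorm_convol_heatKernel_le (hp : 1 ≤ p) (hr : 0 < r) (hφ : Continuous φ) :
    eLpNorm (convol (heatKernel n r) φ) p ≤ eLpNorm φ p := by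
  rw [funext (convol_heatKernel_eq hr φ)]
  simpa [lintegral_enorm_heatKernel one_pos] using
    eLpNorm_mollify_le hp (continuous_heatKernel (n := n) 1).measurable hφ √r

lemma eLpNorm_convol_heatKernelDt_le (hp : 1 ≤ p) (hr : 0 < r) (hφ : ContDiff ℝ 1 φ)
    (hφK : LipschitzWith K φ) :
    eLpNorm (convol (heatKernelDt n r) φ) p ≤
      ‖(2 * √r)⁻¹‖ₑ * ((∫⁻ z, ‖‖z‖ * heatKernel n 1 z‖ₑ) * eLpNorm (fderiv ℝ φ) p) := by
  have hscale : convol (heatKernelDt n r) φ = (2 * √r)⁻¹ • mollifyDeriv (heatKernel n 1) φ √r :=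
    funext (convol_heatKernelDt_eq hr hφ hφK)
  rw [hscale, eLpNorm_const_smul]
  gcongr
  exact eLpNorm_mollifyDeriv_le hp (continuous_heatKernel 1).measurable hφ √r

lemma intervalIntegrable_convol_heatKernelDt {s t : ℝ} (hst : s ≤ t) (hφ : ContDiff ℝ 1 φ)
    (hφK : LipschitzWith K φ) (ξ : EuclideanSpace ℝ (Fin n)) :
    IntervalIntegrable (fun u => convol (heatKernelDt n (t - u)) φ ξ) volume s t := by
  have hcont := continuous_mollifyDeriv (continuous_heatKernel (n := n) 1).aestronglyMeasurable
    (integrable_norm_mul_heatKernel one_pos) hφ hφK ξ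
  have hint := ((intervalIntegrable_inv_sqrt_sub hst).const_mul 2⁻¹).mul_continuousOn
    (hcont.comp (by fun_prop : Continuous fun u => √(t - u))).continuousOn
  rw [intervalIntegrable_iff_integrableOn_Ioo_of_le hst] at hint ⊢
  refine hint.congr_fun (fun u hu => ?_) measurableSet_Ioo
  simp only [convol_heatKernelDt_eq (sub_pos.2 hu.2) hφ hφK, mul_inv, Function.comp_apply]

lemma integral_mul_convol_heatKernel {s t : ℝ} (hst : s ≤ t) {a : ℝ → ℝ}
    (ha : IntervalIntegrable a volume s t) (hφ : ContDiff ℝ 1 φ) (hφK : LipschitzWith K φ)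
    (ξ : EuclideanSpace ℝ (Fin n)) :
    ∫ u in s..t, a u * convol (heatKernel n (t - u)) φ ξ =
      (∫ u in s..t, a u) * φ ξ +
        ∫ u in s..t, (∫ v in s..u, a v) * convol (heatKernelDt n (t - u)) φ ξ := by
  have hcont : Continuous fun r => heatS n r φ ξ := by
    simp_rw [heatS_eq_mollify]
    exact (continuous_iff_continuousAt.2 fun q => (hasDerivAt_mollify
      (integrable_heatKernel one_pos) (integrable_norm_mul_heatKernel one_pos) hφ hφK
      q ξ).continuousAt).comp Real.continuous_sqrt
  have hderiv : ∀ u ∈ Set.Ioo s t, HasDerivAt (fun u => heatS n (t - u) φ ξ)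
      (-convol (heatKernelDt n (t - u)) φ ξ) u := fun u hu => by
    refine ((hasDerivAt_convol_heatKernel (sub_pos.2 hu.2) hφK ξ).comp_const_sub t
      u).congr_of_eventuallyEq ?_
    filter_upwards [Iio_mem_nhds hu.2] with v hv
    rw [heatS, if_pos (sub_pos.2 hv)]
  have hheatS : ∫ u in s..t, a u * convol (heatKernel n (t - u)) φ ξ =
      ∫ u in s..t, a u * heatS n (t - u) φ ξ := by
    rw [intervalIntegral.integral_of_le hst, intervalIntegral.integral_of_le hst,
      ← restrict_Ioo_eq_restrict_Ioc]
    exact setIntegral_congr_fun measurableSet_Ioo fun u hu => by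
      simp only [heatS, if_pos (sub_pos.2 hu.2)]
  have hparts := integral_mul_eq_of_hasDerivAt hst ha (by fun_prop) hderiv
    (intervalIntegrable_convol_heatKernelDt hst hφ hφK ξ).neg
  simpa [heatS, hheatS] using hparts

end HeatKernel

theorem integration_by_parts_second_order_general {n : ℕ} {p : ℝ≥0∞} (hp : 1 ≤ p)
    {φ : EuclideanSpace ℝ (Fin n) → ℝ} {K : ℝ≥0} (hφ : ContDiff ℝ 1 φ) (hφK : LipschitzWith K φ)
    (hφp : MemLp φ p) (hφ'p : MemLp (fderiv ℝ φ) p) {a : ℝ → ℝ} {s t : ℝ} (hst : s ≤ t)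
    (ha : IntervalIntegrable a volume s t) :
    (∫⁻ u in Set.Ioc s t,
        eLpNorm (fun ξ => a u * convol (heatKernel n (t - u)) φ ξ) p volume) < ⊤ ∧
    (∫⁻ u in Set.Ioc s t,
        eLpNorm (fun ξ => (∫ v in s..u, a v) * convol (heatKernelDt n (t - u)) φ ξ) p volume) < ⊤ ∧
    ∀ ξ, ∫ u in s..t, a u * convol (heatKernel n (t - u)) φ ξ =
      (∫ u in s..t, a u) * φ ξ +
        ∫ u in s..t, (∫ v in s..u, a v) * convol (heatKernelDt n (t - u)) φ ξ := by
  have hmoment := (integrable_norm_mul_heatKernel (n := n) one_pos).hasFiniteIntegral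
  have hprimitive : ContinuousOn (fun u => ∫ v in s..u, a v) (Set.uIcc s t) :=
    intervalIntegral.continuousOn_primitive_interval' ha Set.left_mem_uIcc
  have hsingular : IntervalIntegrable (fun u => (2 * √(t - u))⁻¹) volume s t := by
    simpa only [mul_inv] using (intervalIntegrable_inv_sqrt_sub hst).const_mul 2⁻¹
  refine ⟨?_, ?_, integral_mul_convol_heatKernel hst ha hφ hφK⟩
  · refine lintegral_eLpNorm_mul_lt_top hφp.eLpNorm_ne_top hst (B := 1) (by simpa using ha)
      fun u hu => ?_
    simpa using eLpNorm_convol_heatKernel_le hp (sub_pos.2 hu.2) hφ.continuous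
  · exact lintegral_eLpNorm_mul_lt_top (ENNReal.mul_ne_top hmoment.ne hφ'p.eLpNorm_ne_top) hst
      (hsingular.continuousOn_mul hprimitive)
      fun u hu => eLpNorm_convol_heatKernelDt_le hp (sub_pos.2 hu.2) hφ hφK

/-- integration by parts for the second-order heat-convolution
increment.  With `x : [0,T] → ℝ^N` continuously differentiable, `φ` Schwartz and
`x^{2,ij}_{ts} = ∫_s^t (x^i)'(u)(x^j_u - x^j_s) du`, one has, in `L^p(ℝ^n)`,
`∫_s^t (x^i)'(u)(x^j_u - x^j_s)(g_{t-u} * φ) du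
  = x^{2,ij}_{ts} φ + ∫_s^t x^{2,ij}_{us} (∂g_{t-u} * φ) du`,
all integrals being absolutely convergent Bochner integrals in `L^p(ℝ^n)`. -/
theorem integration_by_parts_second_order
    (n : ℕ) (hn : 1 ≤ n) (p : ℝ) (hp : 1 ≤ p) (T : ℝ) (hT : 0 < T)
    (N : ℕ) (hN : 1 ≤ N)
    (x : Fin N → ℝ → ℝ) (hx : ∀ i : Fin N, ContDiff ℝ 1 (x i))
    (φ : SchwartzMap (EuclideanSpace ℝ (Fin n)) ℝ)
    (i j : Fin N) (s t : ℝ) (hs : 0 ≤ s) (hst : s ≤ t) (ht : t ≤ T) :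
    ((∫⁻ u in Set.Ioc s t,
        eLpNorm (fun ξ => deriv (x i) u * (x j u - x j s)
            * convol (heatKernel n (t - u)) (⇑φ) ξ)
          (ENNReal.ofReal p) volume) < ⊤) ∧
    ((∫⁻ u in Set.Ioc s t,
        eLpNorm (fun ξ => (∫ v in s..u, deriv (x i) v * (x j v - x j s))
            * convol (heatKernelDt n (t - u)) (⇑φ) ξ)
          (ENNReal.ofReal p) volume) < ⊤) ∧
    (∀ ξ, (∫ u in s..t, deriv (x i) u * (x j u - x j s)
            * convol (heatKernel n (t - u)) (⇑φ) ξ)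
        = (∫ u in s..t, deriv (x i) u * (x j u - x j s)) * φ ξ
          + ∫ u in s..t, (∫ v in s..u, deriv (x i) v * (x j v - x j s))
              * convol (heatKernelDt n (t - u)) (⇑φ) ξ) := by
  obtain ⟨K, hφK⟩ := exists_lipschitzWith_schwartzMap φ
  have hamplitude : Continuous fun u => deriv (x i) u * (x j u - x j s) :=
    ((hx i).continuous_deriv le_rfl).mul ((hx j).continuous.sub continuous_const)
  exact integration_by_parts_second_order_general (ENNReal.one_le_ofReal.2 hp) (φ.smooth 1) hφK
    (φ.memLp _) (memLp_fderiv_schwartzMap φ _ _) hst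
    (hamplitude.intervalIntegrable s t)
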